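/- Let f : 𝔽₂ⁿ → {1,−1} be a Boolean function with Fourier sparsity s, and let γ₁,…,γ_d be linearly independent linear forms such that f is constant on the affine subspace {x : γ₁(x)=b₁,…,γ_d(x)=b_d} for some b ∈ 𝔽₂^d. Then for every b' ∈ 𝔽₂^d, the restriction of f to the affine subspace V_{b'} = {x : γ₁(x)=b'₁,…,γ_d(x)=b'_d} has Fourier sparsity at most (s+1)/2. -/

import Mathlib

/-!
Write `L` for the linear part of a parametrization of `V_{b'}`, and call two forms `α`
equivalent when their pullbacks `α ∘ L` agree, i.e. when they differ by an element of
the span of the `γᵢ`. Expanding `f` in characters shows that for every base point `x₀`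
the Fourier coefficient of `y ↦ f (x₀ + L y)` at `δ` is the signed sum
`∑_{α ∘ L = δ} f̂(α) (-1)^{α x₀}` over one class (`fCoeff_comp_affine`).

Hence the sparsity on `V_{b'}` is at most the number of classes meeting the Fourier
support of `f`. Choosing `x₀` in `V_b` instead, where `f` is constant, the signed sum
vanishes for every `δ ≠ 0`; so a class `δ ≠ 0` meeting the support cannot meet it in a
single form and meets it at least twice. With `k` classes met, `s ≥ 2 (k - 1) + 1`.
-/

/-- The dual space of `𝔽₂ⁿ`: linear forms `𝔽₂ⁿ → 𝔽₂`. -/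
abbrev DualF (n : ℕ) : Type := (Fin n → ZMod 2) →ₗ[ZMod 2] ZMod 2

/-- A Boolean function takes values in `{1, -1} ⊆ ℝ`. -/
def IsBooleanFn (n : ℕ) (f : (Fin n → ZMod 2) → ℝ) : Prop :=
  ∀ x, f x = 1 ∨ f x = -1

/-- Fourier coefficient `f̂(γ) = 2⁻ⁿ Σ_x f(x) (-1)^(γ x)`. -/
noncomputable def fCoeff (n : ℕ) (f : (Fin n → ZMod 2) → ℝ) (γ : DualF n) : ℝ :=
  (2 ^ n : ℝ)⁻¹ * ∑ x : Fin n → ZMod 2, f x * (-1 : ℝ) ^ (γ x).val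

/-- Fourier support. -/
noncomputable def fSupp (n : ℕ) (f : (Fin n → ZMod 2) → ℝ) : Set (DualF n) :=
  {γ | fCoeff n f γ ≠ 0}

/-- Fourier sparsity. -/
noncomputable def fSpar (n : ℕ) (f : (Fin n → ZMod 2) → ℝ) : ℕ :=
  (fSupp n f).ncard

/-- Fourier dimension: dimension of the 𝔽₂-span of the Fourier support. -/
noncomputable def fDim (n : ℕ) (f : (Fin n → ZMod 2) → ℝ) : ℕ :=
  Module.finrank (ZMod 2) (Submodule.span (ZMod 2) (fSupp n f))

/-- `P` is an (injective) affine-linear parametrization of the affine subspace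
`{x : γ₁ x = b₁, …, γ_d x = b_d}` by `𝔽₂^(n-d)`. -/
def IsAffineParam (n d : ℕ) (γ : Fin d → DualF n) (b : Fin d → ZMod 2)
    (P : (Fin (n - d) → ZMod 2) → (Fin n → ZMod 2)) : Prop :=
  (∃ (L : (Fin (n - d) → ZMod 2) →ₗ[ZMod 2] (Fin n → ZMod 2)) (x₀ : Fin n → ZMod 2),
      P = fun y => x₀ + L y) ∧
  Function.Injective P ∧
  Set.range P = {x | ∀ i, γ i x = b i}

/-- The nontrivial character `a ↦ (-1)^a` of `𝔽₂`, with real values. -/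
noncomputable def sgn (a : ZMod 2) : ℝ := (-1 : ℝ) ^ a.val

lemma sgn_zero : sgn 0 = 1 := by simp [sgn]

lemma sgn_one : sgn 1 = -1 := by simp [sgn, ZMod.val_one]

lemma zmod2_cases (a : ZMod 2) : a = 0 ∨ a = 1 := by
  revert a; decide

lemma sgn_add (a b : ZMod 2) : sgn (a + b) = sgn a * sgn b := by
  have h : (1 : ZMod 2) + 1 = 0 := by decide
  rcases zmod2_cases a with rfl | rfl <;> rcases zmod2_cases b with rfl | rfl <;>
    simp [sgn_zero, sgn_one, h]

lemma sgn_ne_zero (a : ZMod 2) : sgn a ≠ 0 := pow_ne_zero _ (by norm_num)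

lemma sum_sgn_eq_zero {G : Type*} [AddCommGroup G] [Fintype G] (χ : G →+ ZMod 2) (g : G)
    (hg : χ g ≠ 0) : ∑ x, sgn (χ x) = 0 := by
  have h1 : χ g = 1 := (zmod2_cases _).resolve_left hg
  -- translation by `g` permutes the summands and flips all signs
  have h : ∑ x, sgn (χ (g + x)) = ∑ x, sgn (χ x) :=
    Equiv.sum_comp (Equiv.addLeft g) (fun x => sgn (χ x))
  simp only [map_add, sgn_add, h1, sgn_one, ← Finset.mul_sum] at h
  linarith

noncomputable instance dualFintype (n : ℕ) : Fintype (DualF n) :=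
  haveI : Finite (DualF n) := DFunLike.finite _
  Fintype.ofFinite _

lemma card_dualF (n : ℕ) : Fintype.card (DualF n) = 2 ^ n := by
  rw [Module.card_eq_pow_finrank (K := ZMod 2) (V := DualF n)]
  have : Module.finrank (ZMod 2) (DualF n) = n := by
    rw [Module.finrank_linearMap]; simp
  rw [this, ZMod.card]

lemma sum_sgn_point {m : ℕ} (δ : DualF m) [Decidable (δ = 0)] :
    ∑ y, sgn (δ y) = if δ = 0 then (2 : ℝ) ^ m else 0 := by
  split_ifs with h
  · subst h; simp [sgn_zero]
  · obtain ⟨y, hy⟩ : ∃ y, δ y ≠ 0 := by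
      by_contra! hc
      exact h (LinearMap.ext hc)
    exact sum_sgn_eq_zero δ.toAddMonoidHom y hy

lemma sum_sgn_dual {n : ℕ} (z : Fin n → ZMod 2) :
    ∑ α : DualF n, sgn (α z) = if z = 0 then (2 : ℝ) ^ n else 0 := by
  split_ifs with h
  · subst h
    simp [sgn_zero, card_dualF]
  · obtain ⟨i, hi⟩ : ∃ i, z i ≠ 0 := by
      by_contra! hc
      exact h (funext hc)
    exact sum_sgn_eq_zero (LinearMap.applyₗ (R := ZMod 2) z).toAddMonoidHom
      (LinearMap.proj i : DualF n) hi

lemma fourier_inversion (n : ℕ) (f : (Fin n → ZMod 2) → ℝ) (x : Fin n → ZMod 2) :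
    f x = ∑ α : DualF n, fCoeff n f α * sgn (α x) := by
  have h : ∀ α : DualF n, fCoeff n f α * sgn (α x)
      = (2 ^ n : ℝ)⁻¹ * ∑ z, f z * sgn (α (z + x)) := by
    intro α
    simp only [fCoeff, map_add, sgn_add, ← mul_assoc, ← Finset.sum_mul]
    rfl
  have hz : ∀ z, z + x = 0 ↔ z = x := by
    intro z
    rw [add_eq_zero_iff_eq_neg, ZModModule.neg_eq_self]
  simp only [h, ← Finset.mul_sum]
  rw [Finset.sum_comm]
  simp only [← Finset.mul_sum, sum_sgn_dual, hz]
  simp only [mul_ite, mul_zero, Finset.sum_ite_eq', Finset.mem_univ, if_true]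
  field_simp

open Classical in
/-- The Fourier coefficient of an affine pullback `y ↦ f (x₀ + L y)` at `δ` is a signed
sum of the coefficients of `f` at the forms that `L` pulls back to `δ`. -/
lemma fCoeff_comp_affine (n m : ℕ) (f : (Fin n → ZMod 2) → ℝ)
    (L : (Fin m → ZMod 2) →ₗ[ZMod 2] (Fin n → ZMod 2)) (x₀ : Fin n → ZMod 2) (δ : DualF m) :
    fCoeff m (fun y => f (x₀ + L y)) δ
      = ∑ α : DualF n with α.comp L = δ, fCoeff n f α * sgn (α x₀) := by
  have h : ∀ α : DualF n, ∑ y, sgn (α (L y)) * sgn (δ y)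
      = if α.comp L = δ then (2 : ℝ) ^ m else 0 := by
    intro α
    have hz : α.comp L + δ = 0 ↔ α.comp L = δ := by
      rw [add_eq_zero_iff_eq_neg, ZModModule.neg_eq_self]
    simp only [← hz, ← sum_sgn_point, LinearMap.add_apply, LinearMap.comp_apply, sgn_add]
  calc fCoeff m (fun y => f (x₀ + L y)) δ
      = (2 ^ m : ℝ)⁻¹ * ∑ y, (∑ α : DualF n, fCoeff n f α * sgn (α (x₀ + L y))) * sgn (δ y) := by
        simp only [← fourier_inversion]; rfl
    _ = (2 ^ m : ℝ)⁻¹ * ∑ α : DualF n, fCoeff n f α * sgn (α x₀)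
          * ∑ y, sgn (α (L y)) * sgn (δ y) := by
        simp only [Finset.sum_mul, Finset.mul_sum]
        rw [Finset.sum_comm]
        simp only [map_add, sgn_add, mul_assoc]
    _ = _ := by
        simp only [h, mul_ite, mul_zero, Finset.sum_filter, Finset.mul_sum]
        refine Finset.sum_congr rfl fun α _ => ?_
        split_ifs
        · field_simp
        · rfl

lemma fCoeff_const (m : ℕ) (v : ℝ) (δ : DualF m) (hδ : δ ≠ 0) :
    fCoeff m (fun _ => v) δ = 0 := by
  classical
  have h := sum_sgn_point δ
  rw [if_neg hδ] at h
  change (2 ^ m : ℝ)⁻¹ * ∑ x, v * sgn (δ x) = 0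
  rw [← Finset.mul_sum, h, mul_zero, mul_zero]

/-- Linearly independent forms take every prescribed tuple of values. -/
lemma exists_forall_form_eq {n d : ℕ} {γ : Fin d → DualF n} (hγ : LinearIndependent (ZMod 2) γ)
    (b : Fin d → ZMod 2) : ∃ x, ∀ i, γ i x = b i := by
  have hs : LinearMap.range (LinearMap.pi γ) = ⊤ := by
    by_contra hne
    -- a functional vanishing on a proper range would be a linear relation among the `γᵢ`
    obtain ⟨φ, hφ, hle⟩ := Submodule.exists_le_ker_of_lt_top _ (lt_top_iff_ne_top.2 hne)
    have hrep : ∀ w, φ w = ∑ i, φ (Pi.single i 1) * w i := by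
      intro w
      rw [LinearMap.pi_apply_eq_sum_univ φ w]
      refine Finset.sum_congr rfl fun i _ => ?_
      rw [smul_eq_mul, mul_comm]
      congr 2
      ext j
      simp [Pi.single_apply, eq_comm]
    have hrel : ∑ i, φ (Pi.single i 1) • γ i = 0 := by
      refine LinearMap.ext fun x => ?_
      have : φ (LinearMap.pi γ x) = 0 := hle ⟨x, rfl⟩
      rw [hrep] at this
      simpa [LinearMap.sum_apply] using this
    have h0 := Fintype.linearIndependent_iff.1 hγ _ hrel
    apply hφ
    refine LinearMap.ext fun w => ?_
    rw [hrep]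
    simp [h0]
  obtain ⟨x, hx⟩ := LinearMap.range_eq_top.1 hs b
  exact ⟨x, fun i => congrFun hx i⟩

/-- If `f` has Fourier sparsity `s` and is constant on the affine subspace determined
by setting the linearly independent forms `γ₁, …, γ_d` to some values `b`, then for
every `b'`, the restriction of `f` to `V_{b'} = {x : ∀ i, γᵢ x = b'ᵢ}` has Fourier
sparsity at most `(s+1)/2`. -/
theorem sparsity_halves_of_constant_restriction (n d : ℕ) (f : (Fin n → ZMod 2) → ℝ)
    (hf : IsBooleanFn n f) (s : ℕ) (hs : s = fSpar n f)
    (γ : Fin d → DualF n) (hγ : LinearIndependent (ZMod 2) γ)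
    (b : Fin d → ZMod 2)
    (hconst : ∃ v : ℝ, ∀ x, (∀ i, γ i x = b i) → f x = v) :
    ∀ (b' : Fin d → ZMod 2) (P : (Fin (n - d) → ZMod 2) → (Fin n → ZMod 2)),
      IsAffineParam n d γ b' P →
      (fSpar (n - d) (f ∘ P) : ℝ) ≤ ((s : ℝ) + 1) / 2 := by
  classical
  intro b' P hP
  obtain ⟨⟨L, x₀, rfl⟩, -, hrange⟩ := hP
  obtain ⟨v, hv⟩ := hconst
  obtain ⟨x₁, hx₁⟩ := exists_forall_form_eq hγ b
  have hL : ∀ y i, γ i (L y) = 0 := by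
    intro y i
    have hy : x₀ + L y ∈ {x | ∀ i, γ i x = b' i} := hrange ▸ ⟨y, rfl⟩
    have h0 : x₀ + L 0 ∈ {x | ∀ i, γ i x = b' i} := hrange ▸ ⟨0, rfl⟩
    have hy := hy i
    have h0 := h0 i
    simp only [map_zero, add_zero] at h0
    rwa [map_add, h0, add_eq_left] at hy
  have hconst₁ : (fun y => f (x₁ + L y)) = fun _ => v :=
    funext fun y => hv _ fun i => by rw [map_add, hL, hx₁, add_zero]
  set S : Finset (DualF n) := {α | fCoeff n f α ≠ 0} with hS
  set T : Finset (DualF (n - d)) := S.image (fun α => α.comp L) with hT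
  have hs' : s = S.card := by
    rw [hs, fSpar, ← Set.ncard_coe_finset]
    congr 1
    ext α
    simp [fSupp, hS]
  have hle : fSpar (n - d) (f ∘ fun y => x₀ + L y) ≤ T.card := by
    rw [fSpar, ← Set.ncard_coe_finset]
    refine Set.ncard_le_ncard (fun δ hδ => ?_) T.finite_toSet
    change fCoeff (n - d) (fun y => f (x₀ + L y)) δ ≠ 0 at hδ
    rw [fCoeff_comp_affine] at hδ
    obtain ⟨α, hα, hne⟩ := Finset.exists_ne_zero_of_sum_ne_zero hδ
    simp only [hT, hS, Finset.coe_image, Set.mem_image, Finset.mem_coe, Finset.mem_filter,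
      Finset.mem_univ, true_and] at hα ⊢
    exact ⟨α, left_ne_zero_of_mul hne, hα⟩
  have hfib : ∀ δ ∈ T.erase 0, 2 ≤ (S.filter fun α => α.comp L = δ).card := by
    intro δ hδ
    obtain ⟨hδ0, hδT⟩ := Finset.mem_erase.1 hδ
    obtain ⟨α, hαS, hα⟩ := Finset.mem_image.1 hδT
    by_contra! hlt
    have hαm : α ∈ S.filter fun α => α.comp L = δ := Finset.mem_filter.2 ⟨hαS, hα⟩
    have huniq : ∀ β ∈ S.filter (fun α => α.comp L = δ), β = α := fun β hβ =>
      Finset.card_le_one.1 (Nat.lt_succ_iff.1 hlt) β hβ α hαm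
    have h := fCoeff_comp_affine n (n - d) f L x₁ δ
    rw [hconst₁, fCoeff_const _ _ _ hδ0, Finset.sum_eq_single_of_mem α (by simpa using hα)] at h
    · exact mul_ne_zero (Finset.mem_filter.1 hαS).2 (sgn_ne_zero _) h.symm
    · intro β hβ hne
      have hβ0 : fCoeff n f β = 0 := by
        by_contra hc
        exact hne (huniq β (by simpa [hS, hc] using hβ))
      rw [hβ0, zero_mul]
  have hcount : 2 * T.card ≤ S.card + 1 := by
    have hsum : S.card = ∑ δ ∈ T, (S.filter fun α => α.comp L = δ).card :=
      Finset.card_eq_sum_card_image _ _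
    have h2 : (T.erase 0).card * 2 ≤ ∑ δ ∈ T.erase 0, (S.filter fun α => α.comp L = δ).card := by
      simpa using Finset.card_nsmul_le_sum _ _ 2 hfib
    by_cases h0 : (0 : DualF (n - d)) ∈ T
    · have h1 : 1 ≤ (S.filter fun α => α.comp L = 0).card := by
        obtain ⟨α, hαS, hα⟩ := Finset.mem_image.1 h0
        exact Finset.card_pos.2 ⟨α, Finset.mem_filter.2 ⟨hαS, hα⟩⟩
      rw [← Finset.add_sum_erase _ _ h0] at hsum
      have := Finset.card_erase_add_one h0
      omega
    · rw [Finset.erase_eq_of_notMem h0] at h2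
      omega
  have hfin : (2 : ℝ) * fSpar (n - d) (f ∘ fun y => x₀ + L y) ≤ s + 1 := by
    rw [hs']
    exact_mod_cast (Nat.mul_le_mul_left 2 hle).trans hcount
  linarith
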